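/- arXiv:1901.10886 — 2 statements merged into one kernel-verified Lean document; each statement's English description precedes it below -/
import Mathlib

section
/- For all positive reals u, v, ∫_0^{(3/(4√2))√(u/v)} e^{-ux²}(e^{vx⁴} - 1) dx < (1/(3√3)) · v^{1/2}/u^{3/2}. -/
open Real

/-!
Put `l = u² / v`. The substitution `x = √(u / v) y` turns the claim into
`l ∫_0^c (e^{-l (y² - y⁴)} - e^{-l y²}) dy < 1 / (3√3)` with `c = 3 / (4√2) = √(9 / 32)`.
The integrand is `∫ l e^{-l s} ds` over `y² - y⁴ < s ≤ y²`, so slicing by `s` rewrites the integral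
as `∫_0^{c²} l e^{-l s} W(s) ds`, where `W(s)` is the length of `{y ≤ c | y² - y⁴ < s ≤ y²}`.

`W(s)` is at most the smaller positive root of `y² - y⁴ = s` minus `√s`, and also at most `c - √s`.
Both bounds are convex in `s`, so each lies under its chords. The second takes over from the first
at `s = c² - c⁴ ≈ 0.719 c²`, close to `5 c² / 7`, so the lattice `i c² / 7` gives a good piecewise
linear majorant of `W`. Integrated against `l² e^{-l s}` it becomes a polynomial in
`z = e^{-l c² / 7}`, whose maximum on `[0, 1]` is just below the required constant.
-/

section

open MeasureTheory Set

theorem convexOn_comp_sqrt {f g : ℝ → ℝ} {b : ℝ} (hf : ContinuousOn f (Icc 0 b))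
    (hfg : ∀ t ∈ Ioo 0 b, HasDerivAt f (t * g t) t) (hg : MonotoneOn g (Ioo 0 b)) (hb : 0 ≤ b) :
    ConvexOn ℝ (Icc 0 (b ^ 2)) fun s ↦ f √s := by
  have sqrt_mem {s : ℝ} (hs : s ∈ Ioo 0 (b ^ 2)) : √s ∈ Ioo 0 b :=
    ⟨sqrt_pos.2 hs.1, (sqrt_lt' (hb.lt_of_ne' fun h ↦ by simp [h] at hs)).2 hs.2⟩
  have hderiv : ∀ s ∈ Ioo 0 (b ^ 2), HasDerivAt (fun s ↦ f √s) (g √s / 2) s := fun s hs ↦ by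
    have hs' : √s ≠ 0 := (sqrt_mem hs).1.ne'
    refine ((hfg _ (sqrt_mem hs)).comp s (hasDerivAt_sqrt hs.1.ne')).congr_deriv ?_
    field_simp
  refine MonotoneOn.convexOn_of_deriv (convex_Icc _ _) ?_ ?_ ?_
  · exact hf.comp continuous_sqrt.continuousOn fun s hs ↦
      ⟨sqrt_nonneg s, (sqrt_le_left hb).2 hs.2⟩
  · rw [interior_Icc]
    exact fun s hs ↦ (hderiv s hs).differentiableAt.differentiableWithinAt
  · rw [interior_Icc]
    intro s hs r hr hsr
    rw [(hderiv s hs).deriv, (hderiv r hr).deriv]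
    linarith [hg (sqrt_mem hs) (sqrt_mem hr) (sqrt_le_sqrt hsr)]

theorem le_chord_of_convexOn {f : ℝ → ℝ} {a δ p q s : ℝ} (hf : ConvexOn ℝ (Icc a (a + δ)) f)
    (hδ : 0 < δ) (ha : f a ≤ p) (hb : f (a + δ) ≤ q) (hs : s ∈ Icc a (a + δ)) :
    f s ≤ p + (q - p) / δ * (s - a) := by
  have hle : a ≤ a + δ := by linarith
  have hl : 0 ≤ (a + δ - s) / δ := div_nonneg (sub_nonneg.2 hs.2) hδ.le
  have hr : 0 ≤ (s - a) / δ := div_nonneg (sub_nonneg.2 hs.1) hδ.le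
  calc f s = f ((a + δ - s) / δ * a + (s - a) / δ * (a + δ)) := by congr 1; field_simp; ring
    _ ≤ (a + δ - s) / δ * f a + (s - a) / δ * f (a + δ) :=
      hf.2 (left_mem_Icc.2 hle) (right_mem_Icc.2 hle) hl hr (by field_simp; ring)
    _ ≤ (a + δ - s) / δ * p + (s - a) / δ * q := by gcongr
    _ = p + (q - p) / δ * (s - a) := by field_simp; ring

theorem integral_setIntegral_Ioc_eq {α : Type*} [MeasurableSpace α] {μ : Measure α}
    [IsFiniteMeasure μ] {ν : Measure ℝ} [SFinite ν] {f g : α → ℝ} {w : ℝ → ℝ}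
    (hf : Measurable f) (hg : Measurable g) (hw : Integrable w ν) :
    ∫ y, ∫ s in Ioc (f y) (g y), w s ∂ν ∂μ
      = ∫ s, w s * μ.real {y | s ∈ Ioc (f y) (g y)} ∂ν := by
  have hR : MeasurableSet {p : α × ℝ | p.2 ∈ Ioc (f p.1) (g p.1)} :=
    (measurableSet_lt (hf.comp measurable_fst) measurable_snd).inter
      (measurableSet_le measurable_snd (hg.comp measurable_fst))
  have hint : Integrable ({p : α × ℝ | p.2 ∈ Ioc (f p.1) (g p.1)}.indicator fun p ↦ w p.2)
      (μ.prod ν) := (hw.comp_snd μ).indicator hR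
  calc ∫ y, ∫ s in Ioc (f y) (g y), w s ∂ν ∂μ
      = ∫ y, ∫ s, {p : α × ℝ | p.2 ∈ Ioc (f p.1) (g p.1)}.indicator (fun p ↦ w p.2) (y, s) ∂ν ∂μ :=
        integral_congr_ae <| .of_forall fun y ↦ (integral_indicator measurableSet_Ioc).symm
    _ = ∫ s, ∫ y, {p : α × ℝ | p.2 ∈ Ioc (f p.1) (g p.1)}.indicator (fun p ↦ w p.2) (y, s) ∂μ ∂ν :=
        integral_integral_swap hint
    _ = ∫ s, w s * μ.real {y | s ∈ Ioc (f y) (g y)} ∂ν := by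
        congr! 2 with s
        rw [mul_comm]
        exact integral_indicator_const (w s) (measurable_prodMk_right hR)

theorem intervalIntegrable_measureReal_Ioc {α : Type*} [MeasurableSpace α] {μ : Measure α}
    [IsFiniteMeasure μ] {f g : α → ℝ} (hf : Measurable f) (hg : Measurable g) (a b : ℝ) :
    IntervalIntegrable (fun s ↦ μ.real {y | s ∈ Ioc (f y) (g y)}) volume a b := by
  have hR : MeasurableSet {p : ℝ × α | p.1 ∈ Ioc (f p.2) (g p.2)} :=
    (measurableSet_lt (hf.comp measurable_snd) measurable_fst).inter
      (measurableSet_le measurable_fst (hg.comp measurable_snd))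
  have hmeas : Measurable fun s ↦ μ.real {y | s ∈ Ioc (f y) (g y)} :=
    (measurable_measure_prodMk_left hR).ennreal_toReal
  refine (intervalIntegrable_const (c := μ.real univ)).mono_fun hmeas.aestronglyMeasurable
    (.of_forall fun s ↦ ?_)
  simpa only [norm_of_nonneg measureReal_nonneg] using measureReal_mono (subset_univ _)

theorem integral_const_mul_exp_neg (l a b : ℝ) :
    ∫ s in a..b, l * exp (-l * s) = exp (-l * a) - exp (-l * b) := by
  have hderiv (s : ℝ) : HasDerivAt (fun s ↦ -exp (-l * s)) (l * exp (-l * s)) s :=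
    ((hasDerivAt_id s).const_mul (-l)).exp.neg.congr_deriv (by simp only [id]; ring)
  rw [intervalIntegral.integral_eq_sub_of_hasDerivAt (fun s _ ↦ hderiv s)
    (Continuous.intervalIntegrable (by fun_prop) a b)]
  ring

theorem mul_integral_exp_mul_affine (l a b p m : ℝ) :
    l * ∫ s in a..b, l * exp (-l * s) * (p + m * (s - a))
      = l * (exp (-l * a) * p - exp (-l * b) * (p + m * (b - a)))
        + m * (exp (-l * a) - exp (-l * b)) := by
  have hderiv (s : ℝ) : HasDerivAt (fun s ↦ -(exp (-l * s) * (l * (p + m * (s - a)) + m)))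
      (l * (l * exp (-l * s) * (p + m * (s - a)))) s := by
    have hexp := ((hasDerivAt_id s).const_mul (-l)).exp
    have haff :=
      (((((hasDerivAt_id s).sub_const a).const_mul m).const_add p).const_mul l).add_const m
    exact (hexp.mul haff).neg.congr_deriv (by simp only [id]; ring)
  rw [← intervalIntegral.integral_const_mul, intervalIntegral.integral_eq_sub_of_hasDerivAt
    (fun s _ ↦ hderiv s) (Continuous.intervalIntegrable (by fun_prop) a b)]
  ring

theorem mul_integral_exp_mul_le_of_le_chord {D : ℝ → ℝ} {a δ l p q : ℝ} (hl : 0 ≤ l) (hδ : 0 < δ)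
    (hD : IntervalIntegrable D volume a (a + δ))
    (hDpq : ∀ s ∈ Icc a (a + δ), D s ≤ p + (q - p) / δ * (s - a)) :
    l * ∫ s in a..a + δ, l * exp (-l * s) * D s
      ≤ l * (exp (-l * a) * p - exp (-l * (a + δ)) * q)
        + (q - p) / δ * (exp (-l * a) - exp (-l * (a + δ))) := by
  calc l * ∫ s in a..a + δ, l * exp (-l * s) * D s
      ≤ l * ∫ s in a..a + δ, l * exp (-l * s) * (p + (q - p) / δ * (s - a)) := by
        gcongr
        refine intervalIntegral.integral_mono_on (by linarith) (hD.continuousOn_mul (by fun_prop))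
          (Continuous.intervalIntegrable (by fun_prop) _ _) fun s hs ↦ ?_
        gcongr
        exact hDpq s hs
    _ = _ := by
        rw [mul_integral_exp_mul_affine, add_sub_cancel_left, div_mul_cancel₀ _ hδ.ne',
          add_sub_cancel]

theorem mul_integral_exp_mul_le_sum {D : ℝ → ℝ} {d : ℕ → ℝ} {l δ : ℝ} {n : ℕ} (hl : 0 ≤ l)
    (hδ : 0 < δ) (hD : ∀ a b, IntervalIntegrable D volume a b)
    (hDd : ∀ i < n, ∀ s ∈ Icc (i * δ) (i * δ + δ),
      D s ≤ d i + (d (i + 1) - d i) / δ * (s - i * δ)) :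
    l * ∫ s in (0 : ℝ)..n * δ, l * exp (-l * s) * D s
      ≤ l * (d 0 - exp (-l * δ) ^ n * d n)
        + (1 - exp (-l * δ)) / δ
          * ∑ i ∈ Finset.range n, (d (i + 1) - d i) * exp (-l * δ) ^ i := by
  have hsucc (i : ℕ) : (i + 1 : ℕ) * δ = i * δ + δ := by push_cast; ring
  have hexp (i : ℕ) : exp (-l * (i * δ)) = exp (-l * δ) ^ i := by
    rw [← exp_nat_mul]; ring_nf
  calc l * ∫ s in (0 : ℝ)..n * δ, l * exp (-l * s) * D s
      = ∑ i ∈ Finset.range n, l * ∫ s in i * δ..(i + 1 : ℕ) * δ, l * exp (-l * s) * D s := by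
        rw [← Finset.mul_sum, intervalIntegral.sum_integral_adjacent_intervals
          (a := fun i : ℕ ↦ i * δ) fun _ _ ↦ (hD _ _).continuousOn_mul (by fun_prop),
          Nat.cast_zero, zero_mul]
    _ ≤ ∑ i ∈ Finset.range n,
          (l * (exp (-l * δ) ^ i * d i - exp (-l * δ) ^ (i + 1) * d (i + 1))
          + (1 - exp (-l * δ)) / δ * ((d (i + 1) - d i) * exp (-l * δ) ^ i)) := by
        refine Finset.sum_le_sum fun i hi ↦ ?_
        have h := mul_integral_exp_mul_le_of_le_chord hl hδ (hD _ _) (hDd i (Finset.mem_range.1 hi))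
        rw [← hsucc, hexp, hexp] at h
        exact h.trans_eq (by ring)
    _ = _ := by
        rw [Finset.sum_add_distrib, ← Finset.mul_sum, ← Finset.mul_sum,
          Finset.sum_range_sub' (fun i ↦ exp (-l * δ) ^ i * d i), pow_zero, one_mul]

/-- The smaller nonnegative solution `y` of `y ^ 2 - y ^ 4 = t ^ 2`, for `0 ≤ t ≤ 1 / 2`. It bounds
from above the `y` that `quarticWidth` counts at the level `t ^ 2`. -/
noncomputable def quarticRoot (t : ℝ) : ℝ := (√(1 + 2 * t) - √(1 - 2 * t)) / 2

theorem quarticRoot_nonneg {t : ℝ} (ht : 0 ≤ t) : 0 ≤ quarticRoot t :=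
  div_nonneg (sub_nonneg.2 (sqrt_le_sqrt (by linarith))) zero_le_two

theorem quarticRoot_sq {t : ℝ} (ht : |t| ≤ 1 / 2) :
    quarticRoot t ^ 2 = (1 - √(1 - 4 * t ^ 2)) / 2 := by
  obtain ⟨hlower, hupper⟩ := abs_le.1 ht
  have hp : √(1 + 2 * t) ^ 2 = 1 + 2 * t := sq_sqrt (by linarith)
  have hq : √(1 - 2 * t) ^ 2 = 1 - 2 * t := sq_sqrt (by linarith)
  have hpq : √(1 - 4 * t ^ 2) = √(1 + 2 * t) * √(1 - 2 * t) := by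
    rw [← sqrt_mul (by linarith)]; ring_nf
  rw [quarticRoot, hpq]
  linear_combination (hp + hq) / 4

theorem quarticRoot_mem {t : ℝ} (ht : t ∈ Icc 0 (1 / 2)) :
    quarticRoot t ∈ {y : ℝ | 0 ≤ y ∧ y ^ 2 ≤ 1 / 2} := by
  refine ⟨quarticRoot_nonneg ht.1, ?_⟩
  rw [quarticRoot_sq ((abs_of_nonneg ht.1).trans_le ht.2)]
  linarith [sqrt_nonneg (1 - 4 * t ^ 2)]

theorem quarticRoot_sq_sub_pow_four {t : ℝ} (ht : |t| ≤ 1 / 2) :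
    quarticRoot t ^ 2 - quarticRoot t ^ 4 = t ^ 2 := by
  have hsqrt : √(1 - 4 * t ^ 2) ^ 2 = 1 - 4 * t ^ 2 :=
    sq_sqrt (by linarith [sq_le_sq' (abs_le.1 ht).1 (abs_le.1 ht).2])
  rw [show quarticRoot t ^ 4 = (quarticRoot t ^ 2) ^ 2 by ring, quarticRoot_sq ht]
  linear_combination -hsqrt / 4

theorem strictMonoOn_sq_sub_pow_four :
    StrictMonoOn (fun y : ℝ ↦ y ^ 2 - y ^ 4) {y | 0 ≤ y ∧ y ^ 2 ≤ 1 / 2} := by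
  rintro x ⟨hx, -⟩ y ⟨-, hy⟩ hxy
  have hsq : x ^ 2 < y ^ 2 := by gcongr
  change x ^ 2 - x ^ 4 < y ^ 2 - y ^ 4
  linarith [mul_pos (sub_pos.2 hsq) (by linarith : 0 < 1 - x ^ 2 - y ^ 2)]

theorem quarticRoot_le_iff {t y : ℝ} (ht : t ∈ Icc 0 (1 / 2)) (hy : 0 ≤ y) (hy' : y ^ 2 ≤ 1 / 2) :
    quarticRoot t ≤ y ↔ t ^ 2 ≤ y ^ 2 - y ^ 4 := by
  rw [← quarticRoot_sq_sub_pow_four ((abs_of_nonneg ht.1).trans_le ht.2)]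
  exact (strictMonoOn_sq_sub_pow_four.le_iff_le (quarticRoot_mem ht) ⟨hy, hy'⟩).symm

theorem le_quarticRoot_iff {t y : ℝ} (ht : t ∈ Icc 0 (1 / 2)) (hy : 0 ≤ y) (hy' : y ^ 2 ≤ 1 / 2) :
    y ≤ quarticRoot t ↔ y ^ 2 - y ^ 4 ≤ t ^ 2 := by
  rw [← quarticRoot_sq_sub_pow_four ((abs_of_nonneg ht.1).trans_le ht.2)]
  exact (strictMonoOn_sq_sub_pow_four.le_iff_le ⟨hy, hy'⟩ (quarticRoot_mem ht)).symm

theorem sqrt_mem_Icc_zero_half {s : ℝ} (hs : s ≤ 1 / 4) : √s ∈ Icc 0 (1 / 2) :=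
  ⟨sqrt_nonneg s, (sqrt_le_left (by norm_num)).2 (hs.trans_eq (by norm_num))⟩

theorem quarticRoot_sqrt_sub_sqrt_le {p q s : ℝ} (hs : s ≤ 1 / 4) (hp : p ^ 2 ≤ s) (hq : 0 ≤ q)
    (hq' : q ^ 2 ≤ 1 / 2) (hsq : s ≤ q ^ 2 - q ^ 4) : quarticRoot √s - √s ≤ q - p := by
  have hroot : quarticRoot √s ≤ q :=
    (quarticRoot_le_iff (sqrt_mem_Icc_zero_half hs) hq hq').2 <| by
      rwa [sq_sqrt ((sq_nonneg p).trans hp)]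
  exact sub_le_sub hroot (le_sqrt_of_sq_le hp)

theorem hasDerivAt_quarticRoot_sub_id {t : ℝ} (ht : |t| < 1 / 2) :
    HasDerivAt (fun t ↦ quarticRoot t - t)
      (t * (1 / (√(1 - 2 * t) * (1 + √(1 - 2 * t)))
        - 1 / (√(1 + 2 * t) * (1 + √(1 + 2 * t))))) t := by
  obtain ⟨hlower, hupper⟩ := abs_lt.1 ht
  have hp : 0 < 1 + 2 * t := by linarith
  have hq : 0 < 1 - 2 * t := by linarith
  have dp := (((hasDerivAt_id t).const_mul 2).const_add 1).sqrt hp.ne'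
  have dq := (((hasDerivAt_id t).const_mul 2).const_sub 1).sqrt hq.ne'
  refine (((dp.sub dq).div_const 2).sub (hasDerivAt_id t)).congr_deriv ?_
  have sq_sub_one_div {r : ℝ} (hr : 0 < r) : (r ^ 2 - 1) / (r * (1 + r)) = 1 - 1 / r := by
    field_simp; ring
  have hpt := sq_sub_one_div (sqrt_pos.2 hp)
  have hqt := sq_sub_one_div (sqrt_pos.2 hq)
  rw [sq_sqrt hp.le] at hpt
  rw [sq_sqrt hq.le] at hqt
  simp only [id]
  linear_combination hpt / 2 + hqt / 2

theorem monotoneOn_deriv_quarticRoot_sub_id_div : MonotoneOn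
    (fun t : ℝ ↦ 1 / (√(1 - 2 * t) * (1 + √(1 - 2 * t)))
      - 1 / (√(1 + 2 * t) * (1 + √(1 + 2 * t)))) (Ioo 0 (1 / 2)) := by
  intro x hx y hy hxy
  have hq : 0 < √(1 - 2 * y) := sqrt_pos.2 (by linarith [hy.2])
  have hp : 0 < √(1 + 2 * x) := sqrt_pos.2 (by linarith [hx.1])
  dsimp only
  gcongr

theorem convexOn_quarticRoot_sqrt_sub_sqrt :
    ConvexOn ℝ (Icc 0 (1 / 4)) fun s ↦ quarticRoot √s - √s := by
  have hcont : Continuous fun t ↦ quarticRoot t - t := by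
    unfold quarticRoot
    fun_prop
  have hderiv : ∀ t ∈ Ioo (0 : ℝ) (1 / 2), HasDerivAt (fun t ↦ quarticRoot t - t) _ t := fun t ht ↦
    hasDerivAt_quarticRoot_sub_id ((abs_of_pos ht.1).trans_lt ht.2)
  convert convexOn_comp_sqrt hcont.continuousOn hderiv
    monotoneOn_deriv_quarticRoot_sub_id_div (by norm_num) using 2
  norm_num

/-- The length of the set of `y ∈ (0, c]` with `y ^ 2 - y ^ 4 < s ≤ y ^ 2`, which is the weight of
the level `s` once the integral over `y` is sliced by levels. -/
noncomputable def quarticWidth (c s : ℝ) : ℝ :=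
  (volume.restrict (Ioc 0 c)).real {y | s ∈ Ioc (y ^ 2 - y ^ 4) (y ^ 2)}

theorem intervalIntegrable_quarticWidth (c a b : ℝ) :
    IntervalIntegrable (quarticWidth c) volume a b :=
  intervalIntegrable_measureReal_Ioc (by fun_prop) (by fun_prop) a b

theorem quarticWidth_le {b c s : ℝ} (hb : √s ≤ b)
    (h : ∀ y ∈ Ioc 0 c, y ^ 2 - y ^ 4 < s → y ≤ b) : quarticWidth c s ≤ b - √s := by
  rw [quarticWidth, measureReal_restrict_apply' measurableSet_Ioc, ← volume_real_Icc_of_le hb]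
  refine measureReal_mono ?_ (by simp)
  rintro y ⟨⟨hys, hsy⟩, hy⟩
  exact ⟨sqrt_le_iff.2 ⟨hy.1.le, hsy⟩, h y hy hys⟩

theorem quarticWidth_le_sub_sqrt {c s : ℝ} (hs : √s ≤ c) : quarticWidth c s ≤ c - √s :=
  quarticWidth_le hs fun _ hy _ ↦ hy.2

theorem quarticWidth_le_quarticRoot_sqrt_sub_sqrt {c s : ℝ} (hc : c ^ 2 ≤ 1 / 2)
    (hs : s ∈ Icc 0 (1 / 4)) : quarticWidth c s ≤ quarticRoot √s - √s := by
  have hsq : √s ^ 2 = s := sq_sqrt hs.1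
  have ht := sqrt_mem_Icc_zero_half hs.2
  refine quarticWidth_le ?_ fun y hy hys ↦ ?_
  · rw [le_quarticRoot_iff ht ht.1 (by linarith [hs.2])]
    exact sub_le_self _ (by positivity)
  · have hyc : y ^ 2 ≤ 1 / 2 := (pow_le_pow_left₀ hy.1.le hy.2 2).trans hc
    rw [le_quarticRoot_iff ht hy.1.le hyc, hsq]
    exact hys.le

theorem integral_exp_sub_exp_eq_integral_quarticWidth {c : ℝ} (hc : c ∈ Icc 0 1) (l : ℝ) :
    ∫ y in (0 : ℝ)..c, (exp (-l * (y ^ 2 - y ^ 4)) - exp (-l * y ^ 2))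
      = ∫ s in (0 : ℝ)..c ^ 2, l * exp (-l * s) * quarticWidth c s := by
  have hw : IntegrableOn (fun s ↦ l * exp (-l * s)) (Ioc 0 (c ^ 2)) :=
    Continuous.integrableOn_Ioc (by fun_prop)
  rw [intervalIntegral.integral_of_le hc.1, intervalIntegral.integral_of_le (sq_nonneg c)]
  refine Eq.trans (setIntegral_congr_fun measurableSet_Ioc fun y hy ↦ ?_)
    (integral_setIntegral_Ioc_eq (by fun_prop) (by fun_prop) hw)
  have hy4 : y ^ 4 ≤ y ^ 2 := pow_le_pow_of_le_one hy.1.le (hy.2.trans hc.2) (by norm_num)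
  have hyc : y ^ 2 ≤ c ^ 2 := pow_le_pow_left₀ hy.1.le hy.2 2
  have hsub : Ioc (y ^ 2 - y ^ 4) (y ^ 2) ⊆ Ioc 0 (c ^ 2) :=
    Ioc_subset_Ioc (sub_nonneg.2 hy4) hyc
  rw [Measure.restrict_restrict_of_subset hsub,
    ← intervalIntegral.integral_of_le (sub_le_self _ (by positivity)), integral_const_mul_exp_neg]

/-- The values at the lattice points `i * (9 / 224)`, `i ≤ 7`, of a piecewise linear majorant of
`quarticWidth √(9 / 32)`, each rounded up to a convenient decimal. -/
noncomputable def widthNode : ℕ → ℝ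
  | 1 => 9 / 2000
  | 2 => 27 / 2000
  | 3 => 55 / 2000
  | 4 => 96 / 2000
  | 5 => 165 / 2000
  | 6 => 80 / 2000
  | _ => 0

theorem quarticRoot_sqrt_sub_sqrt_le_widthNode {i : ℕ} (hi : i ≤ 5) :
    quarticRoot √(i * (9 / 224)) - √(i * (9 / 224)) ≤ widthNode i := by
  have le_of_lower {p : ℝ} (hp : 0 ≤ p + widthNode i) (hps : p ^ 2 ≤ i * (9 / 224))
      (hhalf : (p + widthNode i) ^ 2 ≤ 1 / 2)
      (hsq : i * (9 / 224) ≤ (p + widthNode i) ^ 2 - (p + widthNode i) ^ 4) :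
      quarticRoot √(i * (9 / 224)) - √(i * (9 / 224)) ≤ widthNode i := by
    have hs : (i : ℝ) * (9 / 224) ≤ 1 / 4 := by
      have : (i : ℝ) ≤ 5 := by exact_mod_cast hi
      linarith
    simpa only [add_sub_cancel_left] using quarticRoot_sqrt_sub_sqrt_le hs hps hp hhalf hsq
  interval_cases i
  · apply le_of_lower (p := 0) <;> norm_num [widthNode]
  · apply le_of_lower (p := 0.2004) <;> norm_num [widthNode]
  · apply le_of_lower (p := 0.2834) <;> norm_num [widthNode]
  · apply le_of_lower (p := 0.3471) <;> norm_num [widthNode]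
  · apply le_of_lower (p := 0.4008) <;> norm_num [widthNode]
  · apply le_of_lower (p := 0.448) <;> norm_num [widthNode]

theorem sub_sqrt_le_widthNode {i : ℕ} (hi : i ∈ Finset.Icc 5 7) :
    √(9 / 32) - √(i * (9 / 224)) ≤ widthNode i := by
  have sub_le {p q : ℝ} (hq : 0 ≤ q) (hqsq : 9 / 32 ≤ q ^ 2) (hpsq : p ^ 2 ≤ i * (9 / 224)) :
      √(9 / 32) - √(i * (9 / 224)) ≤ q - p :=
    sub_le_sub (sqrt_le_iff.2 ⟨hq, hqsq⟩) (le_sqrt_of_sq_le hpsq)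
  fin_cases hi
  · exact (sub_le (p := 0.448) (q := 0.5304) (by norm_num) (by norm_num) (by norm_num)).trans
      (by norm_num [widthNode])
  · exact (sub_le (p := 0.4905) (q := 0.5304) (by norm_num) (by norm_num) (by norm_num)).trans
      (by norm_num [widthNode])
  · norm_num [widthNode]

theorem quarticWidth_le_chord {i : ℕ} (hi : i < 7) {s : ℝ}
    (hs : s ∈ Icc (i * (9 / 224) : ℝ) (i * (9 / 224) + 9 / 224)) :
    quarticWidth √(9 / 32) s
      ≤ widthNode i + (widthNode (i + 1) - widthNode i) / (9 / 224) * (s - i * (9 / 224)) := by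
  have hδ : (0 : ℝ) < 9 / 224 := by norm_num
  have hsucc : (i * (9 / 224) + 9 / 224 : ℝ) = (i + 1 : ℕ) * (9 / 224) := by push_cast; ring
  have hi0 : (0 : ℝ) ≤ i * (9 / 224) := by positivity
  rcases Nat.lt_or_ge i 5 with hrise | hfall
  · have hhalf : √(9 / 32) ^ 2 ≤ 1 / 2 := by rw [sq_sqrt (by norm_num)]; norm_num
    have hsub : Icc (i * (9 / 224) : ℝ) (i * (9 / 224) + 9 / 224) ⊆ Icc 0 (1 / 4) := by
      have : (i : ℝ) ≤ 4 := by exact_mod_cast Nat.le_of_lt_succ hrise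
      exact Icc_subset_Icc hi0 (by linarith)
    refine (quarticWidth_le_quarticRoot_sqrt_sub_sqrt hhalf (hsub hs)).trans ?_
    refine le_chord_of_convexOn (convexOn_quarticRoot_sqrt_sub_sqrt.subset hsub (convex_Icc _ _)) hδ
      (quarticRoot_sqrt_sub_sqrt_le_widthNode hrise.le) ?_ hs
    rw [hsucc]
    exact quarticRoot_sqrt_sub_sqrt_le_widthNode hrise
  · have hconvex : ConvexOn ℝ (Icc (i * (9 / 224) : ℝ) (i * (9 / 224) + 9 / 224))
        fun s ↦ √(9 / 32) - √s :=
      (convexOn_const _ (convex_Icc _ _)).sub <| strictConcaveOn_sqrt.concaveOn.subset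
        (Icc_subset_Ici_self.trans (Ici_subset_Ici.2 hi0)) (convex_Icc _ _)
    have hsc : s ≤ 9 / 32 := by
      have : (i : ℝ) ≤ 6 := by exact_mod_cast Nat.le_of_lt_succ hi
      linarith [hs.2]
    refine (quarticWidth_le_sub_sqrt (sqrt_le_sqrt hsc)).trans ?_
    refine le_chord_of_convexOn hconvex hδ
      (sub_sqrt_le_widthNode (Finset.mem_Icc.2 ⟨hfall, hi.le⟩)) ?_ hs
    rw [hsucc]
    exact sub_sqrt_le_widthNode (Finset.mem_Icc.2 ⟨hfall.trans i.le_succ, hi⟩)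

theorem one_sub_sq_mul_sum_widthNode_le {z : ℝ} (h0 : 0 ≤ z) (h1 : z ≤ 1) :
    (1 - z) ^ 2 * ∑ i ∈ Finset.range 6, widthNode (i + 1) * z ^ i ≤ 77 / 10000 := by
  have quintic_nonneg :
      0 ≤ 22 + 52 * z + 83 * z ^ 2 + 80 * z ^ 3 - 90 * z ^ 4 - 80 * z ^ 5 := by
    have h4 : z ^ 4 ≤ z ^ 3 := pow_le_pow_of_le_one h0 h1 (by norm_num)
    have h5 : z ^ 5 ≤ z ^ 2 := pow_le_pow_of_le_one h0 h1 (by norm_num)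
    have h3 : z ^ 3 ≤ z := pow_le_of_le_one h0 h1 (by norm_num)
    linarith [pow_nonneg h0 2]
  -- The left side peaks near `z = 17 / 32`, so its deficit is almost divisible by this square.
  have hsq := sq_nonneg (z - 17 / 32)
  simp only [Finset.sum_range_succ, Finset.sum_range_zero, widthNode]
  linarith [mul_nonneg hsq quintic_nonneg, mul_nonneg hsq h0, mul_nonneg hsq (pow_nonneg h0 2),
    mul_nonneg hsq (pow_nonneg h0 3)]

theorem mul_integral_exp_sub_exp_lt {l : ℝ} (hl : 0 ≤ l) :
    l * ∫ y in (0 : ℝ)..√(9 / 32), (exp (-l * (y ^ 2 - y ^ 4)) - exp (-l * y ^ 2))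
      < 1 / (3 * √3) := by
  have hc : √(9 / 32) ∈ Icc 0 1 := ⟨sqrt_nonneg _, sqrt_le_one.2 (by norm_num)⟩
  have hcells : √(9 / 32) ^ 2 = (7 : ℕ) * (9 / 224) := by rw [sq_sqrt (by norm_num)]; norm_num
  have hsum := mul_integral_exp_mul_le_sum hl (by norm_num : (0 : ℝ) < 9 / 224)
    (intervalIntegrable_quarticWidth √(9 / 32)) fun i hi s ↦ quarticWidth_le_chord hi
  have hsqrt : √3 < 1.734 := (sqrt_lt' (by norm_num)).2 (by norm_num)
  rw [integral_exp_sub_exp_eq_integral_quarticWidth hc, hcells]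
  set z := exp (-l * (9 / 224))
  have hz : z ≤ 1 := exp_le_one_iff.2 (by linarith)
  calc l * ∫ s in (0 : ℝ)..(7 : ℕ) * (9 / 224), l * exp (-l * s) * quarticWidth √(9 / 32) s
      ≤ 224 / 9 * ((1 - z) ^ 2 * ∑ i ∈ Finset.range 6, widthNode (i + 1) * z ^ i) :=
        hsum.trans_eq (by simp only [Finset.sum_range_succ, Finset.sum_range_zero, widthNode]; ring)
    _ ≤ 224 / 9 * (77 / 10000) := by
        gcongr
        exact one_sub_sq_mul_sum_widthNode_le (exp_pos _).le hz
    _ < 1 / (3 * √3) := by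
        rw [lt_div_iff₀ (by positivity)]
        linarith

theorem integral_exp_mul_exp_sub_one_rescale {u v : ℝ} (hu : 0 < u) (hv : 0 < v) (c : ℝ) :
    ∫ x in (0 : ℝ)..(c * √(u / v)), exp (-u * x ^ 2) * (exp (v * x ^ 4) - 1)
      = √(u / v) * ∫ y in (0 : ℝ)..c,
          (exp (-(u ^ 2 / v) * (y ^ 2 - y ^ 4)) - exp (-(u ^ 2 / v) * y ^ 2)) := by
  have hr : √(u / v) ^ 2 = u / v := sq_sqrt (by positivity)
  have h := intervalIntegral.mul_integral_comp_mul_right (a := 0) (b := c)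
    (f := fun x ↦ exp (-u * x ^ 2) * (exp (v * x ^ 4) - 1)) √(u / v)
  rw [zero_mul] at h
  rw [← h]
  congr! 3 with y
  have h2 : -u * (y * √(u / v)) ^ 2 = -(u ^ 2 / v) * y ^ 2 := by
    rw [mul_pow, hr]; field_simp
  have h4 : v * (y * √(u / v)) ^ 4 = u ^ 2 / v * y ^ 4 := by
    rw [show (y * √(u / v)) ^ 4 = y ^ 4 * (√(u / v) ^ 2) ^ 2 by ring, hr]; field_simp
  rw [h2, h4, mul_sub, ← exp_add, mul_one]
  ring_nf

theorem sqrt_div_rpow_three_halves {u v : ℝ} (hu : 0 < u) (hv : 0 < v) :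
    √v / u ^ ((3 : ℝ) / 2) = √(u / v) / (u ^ 2 / v) := by
  have hu' : u ^ ((3 : ℝ) / 2) = u * √u := by
    rw [show (3 : ℝ) / 2 = 1 + 1 / 2 by norm_num, rpow_add hu, rpow_one, ← sqrt_eq_rpow]
  rw [hu', sqrt_div hu.le]
  have := sqrt_pos.2 hu
  have := sqrt_pos.2 hv
  field_simp
  rw [sq_sqrt hu.le, sq_sqrt hv.le]
  ring

end

theorem stmt15 (u v : ℝ) (hu : 0 < u) (hv : 0 < v) :
    ∫ x in (0 : ℝ)..(3 / (4 * Real.sqrt 2) * Real.sqrt (u / v)),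
        Real.exp (-u * x ^ 2) * (Real.exp (v * x ^ 4) - 1)
      < (1 / (3 * Real.sqrt 3)) * Real.sqrt v / u ^ ((3 : ℝ) / 2) := by
  have hc : 3 / (4 * √2) = √(9 / 32) := by
    rw [eq_comm, sqrt_eq_iff_eq_sq (by norm_num) (by positivity), div_pow, mul_pow,
      sq_sqrt zero_le_two]
    norm_num
  have hl : 0 < u ^ 2 / v := by positivity
  have hscale : 0 < √(u / v) / (u ^ 2 / v) := by positivity
  have hlt := mul_lt_mul_of_pos_left (mul_integral_exp_sub_exp_lt hl.le) hscale
  rw [hc, integral_exp_mul_exp_sub_one_rescale hu hv, mul_div_assoc,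
    sqrt_div_rpow_three_halves hu hv, mul_comm (1 / (3 * √3))]
  rwa [← mul_assoc, div_mul_cancel₀ _ hl.ne'] at hlt
end

section
/- Suppose x₀ > 0, g > 0, and f ∈ C⁴([-x₀, x₀]; ℝ) is an even function with f(0) = 0, f'(0) = 0, f''(0) = -g. Let h = sup_{|x| ≤ x₀} |f⁽⁴⁾(x)| and suppose x₀² < 27g/(8h). Then √(g/(2π)) ∫_{-x₀}^{x₀} e^{f(x)} dx ≤ 1 + (√2/(9√π)) · h^{1/2}/g. -/
open Real MeasureTheory intervalIntegral

open scoped Nat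

/-! Taylor's theorem gives `f x ≤ -g x² / 2 + h x⁴ / 24`, and enlarging the interval to the critical
radius `x² = 27 g / (8 h)` turns the claim, after rescaling to `[0, 1]`, into
`L m ≤ √(π / 2) / √m + (√6 / 12) / m` for `L m = ∫₀¹ exp (-m (z² / 2 - 9 z⁴ / 64)) dz` and
`m = 27 g² / (8 h)`. For large `m`, a power series comparison of `exp (9 m z⁴ / 64)` on `z ≤ 1`
bounds the integrand by a combination of Gaussians that stays nonnegative for `z > 1`, so the whole
half-line may be integrated. For the remaining `m`, both sides are convex in `m`: `L` lies below a
tangent of the right-hand side as soon as it does at the two ends of an interval, and four such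
intervals suffice. -/

section Taylor

theorem exists_taylor_lagrange_iteratedDeriv {f : ℝ → ℝ} {s : Set ℝ} {c x : ℝ} {n : ℕ}
    (hs : s.OrdConnected) (hc : s ∈ nhds c) (hf : ContDiffOn ℝ (n + 1) f s) (hx : x ∈ s)
    (hcx : c ≠ x) :
    ∃ ξ ∈ Set.uIoo c x, f x = ∑ k ∈ Finset.range (n + 1), iteratedDeriv k f c / k ! * (x - c) ^ k +
      iteratedDeriv (n + 1) f ξ * (x - c) ^ (n + 1) / (n + 1)! := by
  obtain ⟨ξ, hξ, hremainder⟩ := taylor_mean_remainder_lagrange_iteratedDeriv hcx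
    (hf.mono (hs.uIcc_subset (mem_of_mem_nhds hc) hx))
  have hderiv : ∀ k ∈ Finset.range (n + 1),
      iteratedDerivWithin k f (Set.uIcc c x) c = iteratedDeriv k f c := fun k hk =>
    iteratedDerivWithin_eq_iteratedDeriv (uniqueDiffOn_uIcc hcx)
      ((hf.contDiffAt hc).of_le (mod_cast (Finset.mem_range.1 hk).le)) Set.left_mem_uIcc
  refine ⟨ξ, hξ, ?_⟩
  rw [← hremainder, taylor_within_apply, add_comm, ← sub_eq_iff_eq_add]
  congr 1
  refine Finset.sum_congr rfl fun k hk => ?_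
  rw [hderiv k hk, smul_eq_mul]
  ring

theorem le_taylor_add_of_iteratedDeriv_le {f : ℝ → ℝ} {s : Set ℝ} {c x h : ℝ} {n : ℕ}
    (hn : Even (n + 1)) (hs : s.OrdConnected) (hc : s ∈ nhds c) (hf : ContDiffOn ℝ (n + 1) f s)
    (hh : ∀ y ∈ interior s, iteratedDeriv (n + 1) f y ≤ h) (hx : x ∈ s) :
    f x ≤ ∑ k ∈ Finset.range (n + 1), iteratedDeriv k f c / k ! * (x - c) ^ k +
      h * (x - c) ^ (n + 1) / (n + 1)! := by
  rcases eq_or_ne c x with rfl | hcx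
  · simp [Finset.sum_range_succ']
  obtain ⟨ξ, hξ, htaylor⟩ := exists_taylor_lagrange_iteratedDeriv hs hc hf hx hcx
  have hξs : ξ ∈ interior s := interior_maximal
    (Set.uIoo_subset_uIcc_self.trans (hs.uIcc_subset (mem_of_mem_nhds hc) hx)) isOpen_Ioo hξ
  rw [htaylor]
  gcongr
  · exact hn.pow_nonneg _
  · exact hh ξ hξs

theorem exp_neg_le_sum_range {n : ℕ} (hn : Odd n) {x : ℝ} (hx : 0 ≤ x) :
    exp (-x) ≤ ∑ k ∈ Finset.range n, (-x) ^ k / k ! := by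
  obtain ⟨n, rfl⟩ : ∃ l, n = l + 1 := Nat.exists_eq_succ_of_ne_zero hn.pos.ne'
  rcases hx.eq_or_lt with rfl | hx
  · simp [Finset.sum_range_succ']
  obtain ⟨ξ, -, htaylor⟩ := exists_taylor_lagrange_iteratedDeriv (f := exp) (n := n)
    Set.ordConnected_univ Filter.univ_mem contDiff_exp.contDiffOn (Set.mem_univ (-x))
    (neg_lt_zero.2 hx).ne'
  have hremainder : exp ξ * (-x) ^ (n + 1) / (n + 1)! ≤ 0 :=
    div_nonpos_of_nonpos_of_nonneg
      (mul_nonpos_of_nonneg_of_nonpos (exp_pos ξ).le (hn.pow_nonpos (neg_nonpos.2 hx.le)))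
      (by positivity)
  simp only [iteratedDeriv_eq_iterate, iter_deriv_exp, exp_zero, sub_zero, one_div_mul_eq_div]
    at htaylor
  linarith

theorem iteratedDeriv_zero_of_even {f : ℝ → ℝ} (hf : f.Even) {n : ℕ} (hn : Odd n) :
    iteratedDeriv n f 0 = 0 := by
  have hneg := iteratedDeriv_comp_neg n f 0
  simp only [hf _, hn.neg_one_pow, neg_zero, neg_smul, one_smul] at hneg
  linarith

end Taylor

section ExpPowerSeries

theorem exp_mul_sub_sum_range_le {κ s : ℝ} (hκ : 0 ≤ κ) (hs₀ : 0 ≤ s) (hs₁ : s ≤ 1) (n : ℕ) :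
    exp (κ * s) - ∑ k ∈ Finset.range n, (κ * s) ^ k / k ! ≤
      s ^ n * (exp κ - ∑ k ∈ Finset.range n, κ ^ k / k !) := by
  have htail (x : ℝ) : HasSum (fun k => x ^ (k + n) / (k + n)!)
      (exp x - ∑ k ∈ Finset.range n, x ^ k / k !) :=
    (hasSum_nat_add_iff' n).2 (exp_eq_exp_ℝ ▸ NormedSpace.expSeries_div_hasSum_exp x)
  refine hasSum_le (fun k => ?_) (htail (κ * s)) ((htail κ).mul_left (s ^ n))
  have hpow : s ^ (k + n) ≤ s ^ n := pow_le_pow_of_le_one hs₀ hs₁ (Nat.le_add_left n k)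
  rw [mul_pow, ← mul_div_assoc, mul_comm]
  gcongr

end ExpPowerSeries

section Convexity

theorem convexOn_integral {α E : Type*} [MeasurableSpace α] {μ : Measure α} [AddCommMonoid E]
    [Module ℝ E] {s : Set E} {F : E → α → ℝ} (hs : Convex ℝ s)
    (hF : ∀ᵐ z ∂μ, ConvexOn ℝ s fun m => F m z) (hint : ∀ m ∈ s, Integrable (F m) μ) :
    ConvexOn ℝ s fun m => ∫ z, F m z ∂μ := by
  refine ⟨hs, fun x hx y hy a b ha hb hab => ?_⟩
  simp only [smul_eq_mul]
  rw [← MeasureTheory.integral_const_mul, ← MeasureTheory.integral_const_mul,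
    ← MeasureTheory.integral_add ((hint x hx).const_mul a) ((hint y hy).const_mul b)]
  refine integral_mono_ae (hint _ (hs hx hy ha hb hab))
    (((hint x hx).const_mul a).add ((hint y hy).const_mul b)) ?_
  filter_upwards [hF] with z hz using hz.2 hx hy ha hb hab

theorem convexOn_integral_exp_neg_mul {α : Type*} [MeasurableSpace α] {μ : Measure α} {q : α → ℝ}
    (hint : ∀ m : ℝ, Integrable (fun z => exp (-(m * q z))) μ) :
    ConvexOn ℝ Set.univ fun m : ℝ => ∫ z, exp (-(m * q z)) ∂μ := by
  refine convexOn_integral convex_univ (.of_forall fun z => ?_) fun m _ => hint m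
  have hcomp := convexOn_exp.comp_linearMap (LinearMap.mulLeft ℝ (-q z))
  simpa [Function.comp_def, mul_comm] using hcomp

theorem le_of_le_endpoints_of_convexOn_of_concaveOn {s : Set ℝ} {f g : ℝ → ℝ}
    (hf : ConvexOn ℝ s f) (hg : ConcaveOn ℝ s g) {a b m : ℝ} (has : a ∈ s) (hbs : b ∈ s)
    (hm : m ∈ Set.Icc a b) (ha : f a ≤ g a) (hb : f b ≤ g b) : f m ≤ g m := by
  have hmax := (hf.sub hg).le_max_of_mem_Icc has hbs hm
  exact sub_nonpos.1 (hmax.trans (max_le (sub_nonpos.2 ha) (sub_nonpos.2 hb)))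

/-- The tangent line at `m = c ^ 2` of the convex function `m ↦ A / √m + B / m`, used to compare
that function with a convex function from the values of the latter at two points. -/
noncomputable def invSqrtTangent (A B c m : ℝ) : ℝ :=
  A * (3 / (2 * c) - m / (2 * c ^ 3)) + B * (2 / c ^ 2 - m / c ^ 4)

theorem concaveOn_invSqrtTangent (A B c : ℝ) : ConcaveOn ℝ Set.univ (invSqrtTangent A B c) := by
  refine ⟨convex_univ, fun x _ y _ a b _ _ hab => le_of_eq ?_⟩
  obtain rfl : b = 1 - a := by linarith
  simp only [invSqrtTangent, smul_eq_mul]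
  ring

theorem invSqrtTangent_sq_le {A B c w : ℝ} (hA : 0 ≤ A) (hB : 0 ≤ B) (hc : 0 < c) (hw : 0 < w) :
    invSqrtTangent A B c (w ^ 2) ≤ A / w + B / w ^ 2 := by
  have hinv : 3 / (2 * c) - w ^ 2 / (2 * c ^ 3) ≤ 1 / w := by
    have hgap : 1 / w - (3 / (2 * c) - w ^ 2 / (2 * c ^ 3)) =
        (w - c) ^ 2 * (w + 2 * c) / (2 * c ^ 3 * w) := by
      field_simp
      ring
    exact sub_nonneg.1 (hgap ▸ by positivity)
  have hinv_sq : 2 / c ^ 2 - w ^ 2 / c ^ 4 ≤ 1 / w ^ 2 := by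
    have hgap : 1 / w ^ 2 - (2 / c ^ 2 - w ^ 2 / c ^ 4) =
        (w ^ 2 - c ^ 2) ^ 2 / (c ^ 4 * w ^ 2) := by
      field_simp
      ring
    exact sub_nonneg.1 (hgap ▸ by positivity)
  calc invSqrtTangent A B c (w ^ 2) ≤ A * (1 / w) + B * (1 / w ^ 2) := by
        unfold invSqrtTangent
        gcongr
    _ = A / w + B / w ^ 2 := by ring

end Convexity

section QuarticIntegral

/-- The Laplace-type integral of the quartic perturbation `z² / 2 - a z⁴` of the Gaussian phase,
with large parameter `m`. The interval of integration is normalised to `[0, 1]`. -/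
noncomputable def quarticIntegral (a m : ℝ) : ℝ :=
  ∫ z in (0 : ℝ)..1, exp (-(m * (z ^ 2 / 2 - a * z ^ 4)))

theorem convexOn_quarticIntegral (a : ℝ) : ConvexOn ℝ Set.univ (quarticIntegral a) := by
  unfold quarticIntegral
  simp only [integral_of_le zero_le_one]
  exact convexOn_integral_exp_neg_mul fun m =>
    (Continuous.integrableOn_Icc (by fun_prop)).mono_set Set.Ioc_subset_Icc_self

theorem integral_quartic_pow (a : ℝ) (k : ℕ) :
    ∫ z in (0 : ℝ)..1, (z ^ 2 / 2 - a * z ^ 4) ^ k = ∑ j ∈ Finset.range (k + 1),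
      (-a) ^ j * (1 / 2) ^ (k - j) * k.choose j / (2 * k + 2 * j + 1) := by
  have hbinomial (z : ℝ) : (z ^ 2 / 2 - a * z ^ 4) ^ k = ∑ j ∈ Finset.range (k + 1),
      (-a) ^ j * (1 / 2) ^ (k - j) * k.choose j * z ^ (2 * k + 2 * j) := by
    rw [show z ^ 2 / 2 - a * z ^ 4 = -a * z ^ 4 + 1 / 2 * z ^ 2 by ring, add_pow]
    refine Finset.sum_congr rfl fun j hj => ?_
    have hexp : 2 * k + 2 * j = 4 * j + 2 * (k - j) := by
      have := Finset.mem_range_succ_iff.1 hj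
      omega
    rw [hexp, pow_add, pow_mul, pow_mul, mul_pow, mul_pow]
    ring
  simp_rw [hbinomial]
  rw [integral_finsetSum fun j _ => Continuous.intervalIntegrable (by fun_prop) _ _]
  refine Finset.sum_congr rfl fun j _ => ?_
  rw [intervalIntegral.integral_const_mul, integral_pow]
  push_cast
  simp only [one_pow, ne_eq, Nat.add_eq_zero_iff, one_ne_zero, and_false, not_false_eq_true,
    zero_pow, sub_zero, mul_one_div]

theorem quartic_nonneg {a z : ℝ} (ha : a ≤ 1 / 2) (hz : z ∈ Set.Icc (0 : ℝ) 1) :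
    0 ≤ z ^ 2 / 2 - a * z ^ 4 := by
  have hz_sq : z ^ 2 ≤ 1 := pow_le_one₀ hz.1 hz.2
  nlinarith [sq_nonneg z, sq_nonneg (z ^ 2), mul_nonneg (sq_nonneg z) (sub_nonneg.2 hz_sq)]

theorem quarticIntegral_le_sum_range {a m : ℝ} (ha : a ≤ 1 / 2) (hm : 0 ≤ m) {n : ℕ} (hn : Odd n) :
    quarticIntegral a m ≤ ∑ k ∈ Finset.range n, (-m) ^ k / k ! * ∑ j ∈ Finset.range (k + 1),
      (-a) ^ j * (1 / 2) ^ (k - j) * k.choose j / (2 * k + 2 * j + 1) := by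
  calc quarticIntegral a m
      ≤ ∫ z in (0 : ℝ)..1, ∑ k ∈ Finset.range n,
          (-m) ^ k / k ! * (z ^ 2 / 2 - a * z ^ 4) ^ k := by
        refine integral_mono_on zero_le_one (Continuous.intervalIntegrable (by fun_prop) _ _)
          (Continuous.intervalIntegrable (by fun_prop) _ _) fun z hz => ?_
        refine (exp_neg_le_sum_range hn (mul_nonneg hm (quartic_nonneg ha hz))).trans_eq ?_
        refine Finset.sum_congr rfl fun k _ => ?_
        rw [← neg_mul, mul_pow, div_mul_eq_mul_div]
    _ = _ := by
        rw [integral_finsetSum fun k _ => Continuous.intervalIntegrable (by fun_prop) _ _]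
        simp only [intervalIntegral.integral_const_mul, integral_quartic_pow]

set_option maxHeartbeats 400000 in
-- `norm_num` evaluates double sums of up to 120 rational terms.
theorem quarticIntegral_nodes_le :
    quarticIntegral (9 / 64) 0 ≤ 1 ∧ quarticIntegral (9 / 64) 5 ≤ 0.58 ∧
      quarticIntegral (9 / 64) (31 / 4) ≤ 0.4724 ∧ quarticIntegral (9 / 64) 10 ≤ 0.4146 ∧
      quarticIntegral (9 / 64) (49 / 4) ≤ 0.3726 := by
  refine ⟨(quarticIntegral_le_sum_range (n := 1) ?_ ?_ (by decide)).trans ?_,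
    (quarticIntegral_le_sum_range (n := 7) ?_ ?_ (by decide)).trans ?_,
    (quarticIntegral_le_sum_range (n := 13) ?_ ?_ (by decide)).trans ?_,
    (quarticIntegral_le_sum_range (n := 15) ?_ ?_ (by decide)).trans ?_,
    (quarticIntegral_le_sum_range (n := 15) ?_ ?_ (by decide)).trans ?_⟩
  all_goals norm_num [Finset.sum_range_succ, Nat.choose, Nat.factorial]

theorem quarticIntegral_sq_le_of_nodes {k A B c a b w : ℝ} (hA : 0 ≤ A) (hB : 0 ≤ B) (hc : 0 < c)
    (hw : 0 < w) (hab : w ^ 2 ∈ Set.Icc a b) (ha : quarticIntegral k a ≤ invSqrtTangent A B c a)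
    (hb : quarticIntegral k b ≤ invSqrtTangent A B c b) :
    quarticIntegral k (w ^ 2) ≤ A / w + B / w ^ 2 :=
  (le_of_le_endpoints_of_convexOn_of_concaveOn (convexOn_quarticIntegral k)
    (concaveOn_invSqrtTangent A B c) (Set.mem_univ a) (Set.mem_univ b) hab ha hb).trans
      (invSqrtTangent_sq_le hA hB hc hw)

-- `1.2533` and `0.2041` are rational lower bounds for `√(π / 2)` and `√6 / 12`.
theorem quarticIntegral_sq_le_of_sq_le {w : ℝ} (hw : 0 < w) (hw_sq : w ^ 2 ≤ 49 / 4) :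
    quarticIntegral (9 / 64) (w ^ 2) ≤ 1.2533 / w + 0.2041 / w ^ 2 := by
  obtain ⟨h₀, h₁, h₂, h₃, h₄⟩ := quarticIntegral_nodes_le
  have hpiece {a b c A B : ℝ} (hc : 0 < c) (hab : w ^ 2 ∈ Set.Icc a b)
      (ha : quarticIntegral (9 / 64) a ≤ A) (hb : quarticIntegral (9 / 64) b ≤ B)
      (hA : A ≤ invSqrtTangent 1.2533 0.2041 c a) (hB : B ≤ invSqrtTangent 1.2533 0.2041 c b) :
      quarticIntegral (9 / 64) (w ^ 2) ≤ 1.2533 / w + 0.2041 / w ^ 2 :=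
    quarticIntegral_sq_le_of_nodes (by norm_num) (by norm_num) hc hw hab (ha.trans hA) (hb.trans hB)
  unfold invSqrtTangent at hpiece
  rcases le_total (w ^ 2) 5 with h5 | h5
  · exact hpiece (c := 2) (by norm_num) ⟨sq_nonneg w, h5⟩ h₀ h₁ (by norm_num) (by norm_num)
  rcases le_total (w ^ 2) (31 / 4) with h31 | h31
  · exact hpiece (c := 13 / 5) (by norm_num) ⟨h5, h31⟩ h₁ h₂ (by norm_num) (by norm_num)
  rcases le_total (w ^ 2) 10 with h10 | h10
  · exact hpiece (c := 3) (by norm_num) ⟨h31, h10⟩ h₂ h₃ (by norm_num) (by norm_num)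
  · exact hpiece (c := 10 / 3) (by norm_num) ⟨h10, hw_sq⟩ h₃ h₄ (by norm_num) (by norm_num)

end QuarticIntegral

section Gaussian

theorem integrable_pow_mul_exp_neg_mul_sq {b : ℝ} (hb : 0 < b) (n : ℕ) :
    Integrable fun x : ℝ => x ^ n * exp (-b * x ^ 2) := by
  simpa only [rpow_natCast] using
    integrable_rpow_mul_exp_neg_mul_sq hb (s := n) (by linarith [n.cast_nonneg (α := ℝ)])

theorem integral_pow_mul_exp_neg_mul_sq_Ioi {b : ℝ} (hb : 0 < b) (k : ℕ) :
    ∫ x in Set.Ioi (0 : ℝ), x ^ (2 * k) * exp (-b * x ^ 2) =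
      (2 * k - 1)‼ / (2 * b) ^ k * (√(π / b) / 2) := by
  have hgamma := integral_rpow_mul_exp_neg_mul_rpow (p := 2) (q := (2 * k : ℕ)) (b := b)
    two_pos (neg_one_lt_zero.trans_le (Nat.cast_nonneg _)) hb
  simp only [rpow_two, rpow_natCast] at hgamma
  have hhalf : (((2 * k : ℕ) : ℝ) + 1) / 2 = k + 1 / 2 := by
    push_cast
    ring
  have hsqrt : √b ≠ 0 := by positivity
  rw [hgamma, neg_div, hhalf, Gamma_nat_add_half, rpow_neg hb.le, rpow_add hb, rpow_natCast,
    ← sqrt_eq_rpow, sqrt_div pi_pos.le, mul_pow]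
  field_simp

/-- A combination of Gaussians dominating the integrand of `quarticIntegral a m` on `[0, 1]`. It is
the interpolant of `exp (a * m * z ^ 2 * s)` in `s` of `exp_mul_sub_sum_range_le` with `n = 2`,
taken at `s = z ^ 2` and multiplied by `exp (-(m / 2) * z ^ 2)`. -/
noncomputable def gaussianMajorant (a m z : ℝ) : ℝ :=
  exp (-(m / 2) * z ^ 2) * (1 + a * m * z ^ 4 +
    z ^ 4 * (exp (a * m * z ^ 2) - (1 + a * m * z ^ 2)))

section GaussianMajorant

variable {a m : ℝ}

theorem gaussianMajorant_nonneg (ha : 0 ≤ a) (hm : 0 ≤ m) (z : ℝ) : 0 ≤ gaussianMajorant a m z := by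
  have hexp : 0 ≤ exp (a * m * z ^ 2) - (1 + a * m * z ^ 2) := by
    linarith [add_one_le_exp (a * m * z ^ 2)]
  unfold gaussianMajorant
  positivity

theorem exp_neg_quartic_le_gaussianMajorant (ha : 0 ≤ a) (hm : 0 ≤ m) {z : ℝ}
    (hz : z ∈ Set.Icc (0 : ℝ) 1) :
    exp (-(m * (z ^ 2 / 2 - a * z ^ 4))) ≤ gaussianMajorant a m z := by
  have hseries := exp_mul_sub_sum_range_le (κ := a * m * z ^ 2) (by positivity) (sq_nonneg z)
    (pow_le_one₀ hz.1 hz.2) 2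
  simp only [Finset.sum_range_succ, Finset.sum_range_zero, pow_zero, pow_one, Nat.factorial,
    Nat.cast_one, Nat.mul_one, Nat.succ_eq_add_one, zero_add, div_one] at hseries
  calc exp (-(m * (z ^ 2 / 2 - a * z ^ 4)))
      = exp (-(m / 2) * z ^ 2) * exp (a * m * z ^ 2 * z ^ 2) := by
        rw [← exp_add]
        ring_nf
    _ ≤ gaussianMajorant a m z := by
        unfold gaussianMajorant
        gcongr
        linarith

theorem gaussianMajorant_eq (a m z : ℝ) :
    gaussianMajorant a m z = z ^ (2 * 0) * exp (-(m / 2) * z ^ 2) +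
      (a * m - 1) * (z ^ (2 * 2) * exp (-(m / 2) * z ^ 2)) -
      a * m * (z ^ (2 * 3) * exp (-(m / 2) * z ^ 2)) +
      z ^ (2 * 2) * exp (-(m * (1 / 2 - a)) * z ^ 2) := by
  have hexp : exp (-(m * (1 / 2 - a)) * z ^ 2) =
      exp (-(m / 2) * z ^ 2) * exp (a * m * z ^ 2) := by
    rw [← exp_add]
    ring_nf
  rw [hexp, gaussianMajorant]
  ring

theorem integrable_gaussianMajorant (ha : a < 1 / 2) (hm : 0 < m) :
    Integrable (gaussianMajorant a m) := by
  have hm' : 0 < m / 2 := by positivity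
  have ham : 0 < m * (1 / 2 - a) := mul_pos hm (sub_pos.2 ha)
  rw [funext (gaussianMajorant_eq a m)]
  exact (((integrable_pow_mul_exp_neg_mul_sq hm' _).add
    ((integrable_pow_mul_exp_neg_mul_sq hm' _).const_mul _)).sub
    ((integrable_pow_mul_exp_neg_mul_sq hm' _).const_mul _)).add
    (integrable_pow_mul_exp_neg_mul_sq ham _)

theorem integral_gaussianMajorant_Ioi (ha : a < 1 / 2) (hm : 0 < m) :
    ∫ z in Set.Ioi (0 : ℝ), gaussianMajorant a m z = √(π / (2 * m)) * (1 + 3 * a / m +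
      (3 / ((1 - 2 * a) ^ 2 * √(1 - 2 * a)) - 3 - 15 * a) / m ^ 2) := by
  have hm' : 0 < m / 2 := by positivity
  have ha' : 0 < 1 - 2 * a := by linarith
  have ham : 0 < m * (1 / 2 - a) := mul_pos hm (sub_pos.2 ha)
  have hint {b : ℝ} (hb : 0 < b) (n : ℕ) :
      IntegrableOn (fun z : ℝ => z ^ n * exp (-b * z ^ 2)) (Set.Ioi 0) :=
    (integrable_pow_mul_exp_neg_mul_sq hb n).integrableOn
  have hsqrt : √(π / (m / 2)) = 2 * √(π / (2 * m)) := by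
    rw [show π / (m / 2) = 2 ^ 2 * (π / (2 * m)) by field_simp, sqrt_mul (by positivity),
      sqrt_sq two_pos.le]
  have hsqrt' : √(π / (m * (1 / 2 - a))) = 2 * √(π / (2 * m)) / √(1 - 2 * a) := by
    rw [← hsqrt, ← sqrt_div (by positivity)]
    congr 1
    field_simp
  have hint₀ := hint hm' (2 * 0)
  have hint₂ := (hint hm' (2 * 2)).const_mul (a * m - 1)
  have hint₃ := (hint hm' (2 * 3)).const_mul (a * m)
  simp only [gaussianMajorant_eq]
  rw [MeasureTheory.integral_add ((hint₀.fun_add hint₂).fun_sub hint₃) (hint ham _),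
    MeasureTheory.integral_sub (hint₀.fun_add hint₂) hint₃, MeasureTheory.integral_add hint₀ hint₂,
    MeasureTheory.integral_const_mul, MeasureTheory.integral_const_mul]
  simp only [integral_pow_mul_exp_neg_mul_sq_Ioi hm', integral_pow_mul_exp_neg_mul_sq_Ioi ham,
    hsqrt, hsqrt']
  have hden : m * (1 / 2 - a) = m * (1 - 2 * a) / 2 := by ring
  rw [hden]
  norm_num [Nat.doubleFactorial]
  field_simp
  ring

theorem quarticIntegral_le_gaussian (ha₀ : 0 ≤ a) (ha : a < 1 / 2) (hm : 0 < m) :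
    quarticIntegral a m ≤ √(π / (2 * m)) * (1 + 3 * a / m +
      (3 / ((1 - 2 * a) ^ 2 * √(1 - 2 * a)) - 3 - 15 * a) / m ^ 2) := by
  have hint := integrable_gaussianMajorant ha hm
  calc quarticIntegral a m ≤ ∫ z in (0 : ℝ)..1, gaussianMajorant a m z :=
        integral_mono_on zero_le_one (Continuous.intervalIntegrable (by fun_prop) _ _)
          hint.intervalIntegrable fun z hz => exp_neg_quartic_le_gaussianMajorant ha₀ hm.le hz
    _ = ∫ z in Set.Ioc (0 : ℝ) 1, gaussianMajorant a m z := integral_of_le zero_le_one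
    _ ≤ ∫ z in Set.Ioi (0 : ℝ), gaussianMajorant a m z :=
        setIntegral_mono_set hint.integrableOn
          (.of_forall (gaussianMajorant_nonneg ha₀ hm.le)) Set.Ioc_subset_Ioi_self.eventuallyLE
    _ = _ := integral_gaussianMajorant_Ioi ha hm

end GaussianMajorant

theorem quarticIntegral_sq_le_of_le {w : ℝ} (hw : 7 / 2 ≤ w) :
    quarticIntegral (9 / 64) (w ^ 2) ≤ √(π / 2) / w + √6 / 12 / w ^ 2 := by
  have hw₀ : 0 < w := by linarith
  have hscale : √(π / (2 * w ^ 2)) = √(π / 2) / w := by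
    rw [← div_div, sqrt_div (by positivity), sqrt_sq hw₀.le]
  have hsqrt : 0.8477 ≤ √(23 / 32) := le_sqrt_of_sq_le (by norm_num)
  have hcoeff : 3 / ((23 / 32) ^ 2 * √(23 / 32)) ≤ 6.853 :=
    calc 3 / ((23 / 32) ^ 2 * √(23 / 32)) ≤ 3 / ((23 / 32) ^ 2 * 0.8477) := by gcongr
      _ ≤ 6.853 := by norm_num
  have hpi : √(π / 2) ≤ 1.2534 := sqrt_le_iff.2 ⟨by norm_num, by linarith [pi_lt_d6]⟩
  have hsqrt6 : 0.2041 ≤ √6 / 12 := by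
    have : 2.4492 ≤ √6 := le_sqrt_of_sq_le (by norm_num)
    linarith
  have hcorrection : √(π / 2) * (27 / 64 / w + 1.7437 / w ^ 3) ≤ √6 / 12 :=
    calc √(π / 2) * (27 / 64 / w + 1.7437 / w ^ 3)
        ≤ 1.2534 * (27 / 64 / (7 / 2) + 1.7437 / (7 / 2) ^ 3) := by gcongr
      _ ≤ √6 / 12 := le_trans (by norm_num) hsqrt6
  calc quarticIntegral (9 / 64) (w ^ 2)
      ≤ √(π / (2 * w ^ 2)) * (1 + 3 * (9 / 64) / w ^ 2 + (3 / ((1 - 2 * (9 / 64)) ^ 2 *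
          √(1 - 2 * (9 / 64))) - 3 - 15 * (9 / 64)) / (w ^ 2) ^ 2) :=
        quarticIntegral_le_gaussian (by norm_num) (by norm_num) (by positivity)
    _ ≤ √(π / 2) / w * (1 + 27 / 64 / w ^ 2 + 1.7437 / w ^ 4) := by
        rw [hscale, ← pow_mul]
        norm_num only at hcoeff ⊢
        gcongr
        linarith
    _ = √(π / 2) / w + √(π / 2) * (27 / 64 / w + 1.7437 / w ^ 3) / w ^ 2 := by
        field_simp
        ring
    _ ≤ √(π / 2) / w + √6 / 12 / w ^ 2 := by gcongr

theorem quarticIntegral_sq_le {w : ℝ} (hw : 0 < w) :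
    quarticIntegral (9 / 64) (w ^ 2) ≤ √(π / 2) / w + √6 / 12 / w ^ 2 := by
  rcases le_total w (7 / 2) with hw_le | hw_le
  · have hpi : 1.2533 ≤ √(π / 2) := le_sqrt_of_sq_le (by linarith [pi_gt_d6])
    have hsqrt6 : 2.4492 ≤ √6 := le_sqrt_of_sq_le (by norm_num)
    refine (quarticIntegral_sq_le_of_sq_le hw (by nlinarith)).trans ?_
    gcongr
    linarith
  · exact quarticIntegral_sq_le_of_le hw_le

end Gaussian

section Rescaling

theorem integral_neg_self_of_even {E : Type*} [NormedAddCommGroup E] [NormedSpace ℝ E] {F : ℝ → E}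
    (hF : F.Even) {r : ℝ} (hint : IntervalIntegrable F volume 0 r) :
    ∫ x in -r..r, F x = (2 : ℝ) • ∫ x in (0 : ℝ)..r, F x := by
  have hneg : ∫ x in -r..0, F x = ∫ x in (0 : ℝ)..r, F x := by
    simpa only [hF _, neg_zero] using (integral_comp_neg (a := 0) (b := r) F).symm
  have hint_neg : IntervalIntegrable F volume 0 (-r) := by
    simpa only [hF _, neg_zero] using (IntervalIntegrable.iff_comp_neg (by finiteness)).1 hint
  rw [← integral_add_adjacent_intervals hint_neg.symm hint, hneg, two_smul]

theorem integral_exp_quartic {g : ℝ} (hg : g ≠ 0) (h r : ℝ) :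
    ∫ x in -r..r, exp (-g * x ^ 2 / 2 + h * x ^ 4 / 24) =
      2 * r * quarticIntegral (h * r ^ 2 / (24 * g)) (g * r ^ 2) := by
  rw [integral_neg_self_of_even (fun x => by simp only [neg_sq, Even.neg_pow (by decide : Even 4)])
    (Continuous.intervalIntegrable (by fun_prop) _ _)]
  have hscale := mul_integral_comp_mul_left (a := 0) (b := 1) (c := r)
    (f := fun x => exp (-g * x ^ 2 / 2 + h * x ^ 4 / 24))
  rw [mul_zero, mul_one] at hscale
  rw [smul_eq_mul, ← hscale, mul_assoc, quarticIntegral]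
  congr 3 with z
  congr 1
  field_simp
  ring

theorem error_eq_of_critical_radius {g h r : ℝ} (hg : 0 < g) (hr : 0 < r)
    (hr_sq : h * r ^ 2 = 27 * g / 8) :
    √6 / 12 / (√(π / 2) * (√g * r)) = √2 / (9 * √π) * √h / g := by
  have hsqrt_six : √6 = 4 / 3 * √(27 / 8) := by
    rw [show (6 : ℝ) = (4 / 3) ^ 2 * (27 / 8) by norm_num, sqrt_mul (by norm_num),
      sqrt_sq (by norm_num)]
  have hh_sqrt : √h * r = √(27 / 8) * √g := by
    rw [← sqrt_mul (by norm_num), ← mul_div_right_comm, ← hr_sq, sqrt_mul' _ (sq_nonneg r),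
      sqrt_sq hr.le]
  rw [sqrt_div pi_pos.le, hsqrt_six]
  field_simp
  linear_combination (-36) * √g * hh_sqrt - 36 * √(27 / 8) * sq_sqrt hg.le

theorem integral_exp_quartic_le {g h r : ℝ} (hg : 0 < g) (hr : 0 < r)
    (hr_sq : h * r ^ 2 = 27 * g / 8) :
    √(g / (2 * π)) * ∫ x in -r..r, exp (-g * x ^ 2 / 2 + h * x ^ 4 / 24) ≤
      1 + √2 / (9 * √π) * √h / g := by
  have hg_sq : √g ^ 2 = g := sq_sqrt hg.le
  have hgauss : √(g / (2 * π)) = √g / (2 * √(π / 2)) := by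
    rw [show g / (2 * π) = g / (2 ^ 2 * (π / 2)) by field_simp, sqrt_div hg.le,
      sqrt_mul (by norm_num), sqrt_sq two_pos.le]
  have hrescaled : ∫ x in -r..r, exp (-g * x ^ 2 / 2 + h * x ^ 4 / 24) =
      2 * r * quarticIntegral (9 / 64) ((√g * r) ^ 2) := by
    rw [integral_exp_quartic hg.ne', hr_sq, mul_pow, hg_sq]
    congr 2
    field_simp
    norm_num
  calc √(g / (2 * π)) * ∫ x in -r..r, exp (-g * x ^ 2 / 2 + h * x ^ 4 / 24)
      = √g * r / √(π / 2) * quarticIntegral (9 / 64) ((√g * r) ^ 2) := by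
        rw [hrescaled, hgauss]
        field_simp
    _ ≤ √g * r / √(π / 2) * (√(π / 2) / (√g * r) + √6 / 12 / (√g * r) ^ 2) := by
        gcongr
        exact quarticIntegral_sq_le (by positivity)
    _ = 1 + √6 / 12 / (√(π / 2) * (√g * r)) := by field_simp
    _ = 1 + √2 / (9 * √π) * √h / g := by rw [error_eq_of_critical_radius hg hr hr_sq]

end Rescaling

theorem stmt17_general {x₀ g h : ℝ} {f : ℝ → ℝ} (hx₀ : 0 < x₀) (hg : 0 < g)
    (hf : ContDiffOn ℝ 4 f (Set.Icc (-x₀) x₀)) (hf0 : f 0 = 0) (hf1 : deriv f 0 = 0)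
    (hf2 : iteratedDeriv 2 f 0 = -g) (hf3 : iteratedDeriv 3 f 0 = 0)
    (hh : ∀ x ∈ Set.Ioo (-x₀) x₀, iteratedDeriv 4 f x ≤ h) (hcut : x₀ ^ 2 < 27 * g / (8 * h)) :
    √(g / (2 * π)) * (∫ x in -x₀..x₀, exp (f x)) ≤ 1 + √2 / (9 * √π) * √h / g := by
  have hh₀ : 0 < h := by
    by_contra! hh_nonpos
    exact ((sq_nonneg x₀).trans_lt hcut).not_ge
      (div_nonpos_of_nonneg_of_nonpos (by positivity) (by linarith))
  set r := √(27 * g / (8 * h)) with hr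
  have hx₀r : x₀ ≤ r := le_sqrt_of_sq_le hcut.le
  have hr_sq : h * r ^ 2 = 27 * g / 8 := by
    rw [hr, sq_sqrt (by positivity)]
    field_simp
  have hquartic : ∀ x ∈ Set.Icc (-x₀) x₀, f x ≤ -g * x ^ 2 / 2 + h * x ^ 4 / 24 := by
    intro x hx
    have htaylor := le_taylor_add_of_iteratedDeriv_le (n := 3) (h := h) (by decide)
      Set.ordConnected_Icc (Icc_mem_nhds (neg_lt_zero.2 hx₀) hx₀) (by exact_mod_cast hf)
      (by simpa only [interior_Icc] using hh) hx
    norm_num [Finset.sum_range_succ, Nat.factorial, hf0, hf1, hf2, hf3] at htaylor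
    linarith
  have hint : IntervalIntegrable (fun x => exp (f x)) volume (-x₀) x₀ :=
    hf.continuousOn.rexp.intervalIntegrable_of_Icc (by linarith)
  have hcont : Continuous fun x : ℝ => exp (-g * x ^ 2 / 2 + h * x ^ 4 / 24) := by fun_prop
  calc √(g / (2 * π)) * ∫ x in -x₀..x₀, exp (f x)
      ≤ √(g / (2 * π)) * ∫ x in -x₀..x₀, exp (-g * x ^ 2 / 2 + h * x ^ 4 / 24) := by
        gcongr
        exact integral_mono_on (by linarith) hint (hcont.intervalIntegrable _ _)
          fun x hx => exp_le_exp.2 (hquartic x hx)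
    _ ≤ √(g / (2 * π)) * ∫ x in -r..r, exp (-g * x ^ 2 / 2 + h * x ^ 4 / 24) := by
        gcongr
        exact integral_mono_interval (by linarith) (by linarith) hx₀r
          (.of_forall fun x => (exp_pos _).le) (hcont.intervalIntegrable _ _)
    _ ≤ 1 + √2 / (9 * √π) * √h / g := integral_exp_quartic_le hg (hx₀.trans_le hx₀r) hr_sq

theorem stmt17 (x₀ g h : ℝ) (f : ℝ → ℝ)
    (hx₀ : 0 < x₀) (hg : 0 < g)
    (hf : ContDiffOn ℝ 4 f (Set.Icc (-x₀) x₀))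
    (heven : ∀ x, f (-x) = f x)
    (hf0 : f 0 = 0) (hf1 : deriv f 0 = 0) (hf2 : iteratedDeriv 2 f 0 = -g)
    (hh : ∀ x ∈ Set.Icc (-x₀) x₀, |iteratedDeriv 4 f x| ≤ h)
    (hcut : x₀ ^ 2 < 27 * g / (8 * h)) :
    Real.sqrt (g / (2 * Real.pi)) * (∫ x in (-x₀)..x₀, Real.exp (f x))
      ≤ 1 + (Real.sqrt 2 / (9 * Real.sqrt Real.pi)) * Real.sqrt h / g :=
  stmt17_general hx₀ hg hf hf0 hf1 hf2 (iteratedDeriv_zero_of_even heven (by decide))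
    (fun x hx => (le_abs_self _).trans (hh x (Set.Ioo_subset_Icc_self hx))) hcut
end
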